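/- Let X and Y be measurable spaces, let P and Q be probability measures on X with P absolutely continuous with respect to Q, and let κ be a Markov kernel from X to Y. Write P' = P.bind κ and Q' = Q.bind κ for the images of P and Q under κ. Then for every real λ ≥ 1, ∫ ((dP'/dQ')(y))^λ dQ'(y) ≤ ∫ ((dP/dQ)(x))^λ dQ(x), where dP/dQ denotes the Radon–Nikodym derivative (a [0,∞]-valued function) and the integrals are Lebesgue integrals of [0,∞]-valued functions. Equivalently, the order-λ Rényi moment (and hence the Rényi divergence) cannot increase under post-processing by a Markov kernel. -/

import Mathlib

open MeasureTheory ProbabilityTheory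
open scoped ENNReal

theorem renyi_aux
    {X Y : Type*} [MeasurableSpace X] [MeasurableSpace Y]
    (P Q : Measure X) [IsProbabilityMeasure P] [IsProbabilityMeasure Q]
    (hPQ : P ≪ Q) (κ : Kernel X Y) [IsMarkovKernel κ]
    (lam : ℝ) (hlam : 1 < lam) (n : ℕ) :
    ∫⁻ y, (min (Measure.rnDeriv (P.bind κ) (Q.bind κ) y) n) ^ lam ∂(Q.bind κ)
      ≤ ∫⁻ x, (Measure.rnDeriv P Q x) ^ lam ∂Q := by
  have hl0 : 0 < lam := by linarith
  set g := Measure.rnDeriv (P.bind κ) (Q.bind κ) with hg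
  have hgm : Measurable g := Measure.measurable_rnDeriv _ _
  set f := Measure.rnDeriv P Q with hf
  have hfm : Measurable f := Measure.measurable_rnDeriv _ _
  set h : Y → ℝ≥0∞ := fun y => min (g y) n with hh
  have hhm : Measurable h := hgm.min measurable_const
  have hkm : Measurable (fun y => h y ^ (lam - 1)) := hhm.pow_const _
  change ∫⁻ y, (h y) ^ lam ∂(Q.bind κ) ≤ ∫⁻ x, (f x) ^ lam ∂Q
  set A := ∫⁻ y, (h y) ^ lam ∂(Q.bind κ) with hA
  set B := ∫⁻ x, (f x) ^ lam ∂Q with hB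
  have hAfin : A ≠ ∞ := by
    have : A ≤ ∫⁻ y, (n : ℝ≥0∞) ^ lam ∂(Q.bind κ) := by
      apply lintegral_mono
      intro y
      exact ENNReal.rpow_le_rpow (min_le_right _ _) hl0.le
    refine ne_top_of_le_ne_top ?_ this
    rw [lintegral_const]
    exact ENNReal.mul_ne_top (ENNReal.rpow_ne_top_of_nonneg hl0.le (by simp)) (measure_ne_top _ _)
  have h1 : A ≤ ∫⁻ y, h y ^ (lam - 1) ∂(P.bind κ) := by
    calc A ≤ ∫⁻ y, (g * fun y => h y ^ (lam - 1)) y ∂(Q.bind κ) := by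
          apply lintegral_mono
          intro y
          have : h y ^ lam = h y * h y ^ (lam - 1) := by
            have e := ENNReal.rpow_add_of_nonneg (x := h y) 1 (lam - 1) zero_le_one (by linarith)
            rw [ENNReal.rpow_one] at e
            rw [← e]; congr 1; ring
          simp only [this, Pi.mul_apply]
          gcongr
          exact min_le_left _ _
      _ = ∫⁻ y, h y ^ (lam - 1) ∂((Q.bind κ).withDensity g) :=
          (lintegral_withDensity_eq_lintegral_mul _ hgm hkm).symm
      _ ≤ _ := lintegral_mono' (Measure.withDensity_rnDeriv_le _ _) le_rfl
  have hconj : lam.HolderConjugate (lam / (lam - 1)) := Real.HolderConjugate.conjExponent hlam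
  have h2 : ∫⁻ y, h y ^ (lam - 1) ∂(P.bind κ)
      = ∫⁻ z, ((fun z : X × Y => f z.1) * (fun z : X × Y => h z.2 ^ (lam - 1))) z ∂(Q ⊗ₘ κ) := by
    rw [Measure.lintegral_bind κ.aemeasurable hkm.aemeasurable,
      Measure.lintegral_compProd (by fun_prop)]
    conv_lhs => rw [← Measure.withDensity_rnDeriv_eq P Q hPQ]
    rw [lintegral_withDensity_eq_lintegral_mul _ hfm hkm.lintegral_kernel]
    apply lintegral_congr
    intro x
    simp only [Pi.mul_apply]
    rw [lintegral_const_mul _ hkm]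
  have h3 := ENNReal.lintegral_mul_le_Lp_mul_Lq (Q ⊗ₘ κ) hconj
    (f := fun z : X × Y => f z.1) (g := fun z : X × Y => h z.2 ^ (lam - 1))
    (by fun_prop) (by fun_prop)
  have h4 : ∫⁻ z, f z.1 ^ lam ∂(Q ⊗ₘ κ) = B := by
    rw [Measure.lintegral_compProd (f := fun z : X × Y => f z.1 ^ lam) (by fun_prop)]
    simp [hB]
  have h5 : ∫⁻ z, (h z.2 ^ (lam - 1)) ^ (lam / (lam - 1)) ∂(Q ⊗ₘ κ) = A := by
    rw [Measure.lintegral_compProd (f := fun z : X × Y => (h z.2 ^ (lam - 1)) ^ (lam / (lam - 1)))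
      (by fun_prop), hA, Measure.lintegral_bind κ.aemeasurable (hhm.pow_const _).aemeasurable]
    have : (lam - 1) * (lam / (lam - 1)) = lam := by
      field_simp [show lam - 1 ≠ 0 by linarith]
    simp only [← ENNReal.rpow_mul, this]
  rw [h4, h5] at h3
  have h6 : A ≤ B ^ (1 / lam) * A ^ (1 / (lam / (lam - 1))) := h1.trans (h2.trans_le h3)
  rcases eq_or_ne A 0 with h0 | h0
  · rw [h0]; exact zero_le
  have h7 : A = A ^ (1 / lam) * A ^ (1 / (lam / (lam - 1))) := by
    rw [← ENNReal.rpow_add _ _ h0 hAfin]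
    have : 1 / lam + 1 / (lam / (lam - 1)) = 1 := by
      field_simp [show lam - 1 ≠ 0 by linarith]
      ring
    rw [this, ENNReal.rpow_one]
  have hne0 : A ^ (1 / (lam / (lam - 1))) ≠ 0 := (ENNReal.rpow_pos (pos_iff_ne_zero.2 h0) hAfin).ne'
  have hnet : A ^ (1 / (lam / (lam - 1))) ≠ ∞ := ENNReal.rpow_ne_top_of_ne_zero h0 hAfin
  have h8 : A ^ (1 / lam) ≤ B ^ (1 / lam) := by
    rw [← ENNReal.mul_le_mul_iff_left hne0 hnet, ← h7]
    exact h6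
  exact (ENNReal.rpow_le_rpow_iff (by positivity)).1 h8

/-- **Data processing inequality for Rényi moments.**
For probability measures `P ≪ Q` on `X` and a Markov kernel `κ : X → Y`, with
`P' = P.bind κ` and `Q' = Q.bind κ`, for every real `λ ≥ 1`:
`∫ (dP'/dQ')^λ dQ' ≤ ∫ (dP/dQ)^λ dQ`; hence the order-`λ` Rényi divergence cannot
increase under post-processing by a Markov kernel. -/
theorem renyi_data_processing
    {X Y : Type*} [MeasurableSpace X] [MeasurableSpace Y]
    (P Q : Measure X) [IsProbabilityMeasure P] [IsProbabilityMeasure Q]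
    (hPQ : P ≪ Q) (κ : Kernel X Y) [IsMarkovKernel κ]
    (lam : ℝ) (hlam : 1 ≤ lam) :
    ∫⁻ y, (Measure.rnDeriv (P.bind κ) (Q.bind κ) y) ^ lam ∂(Q.bind κ)
      ≤ ∫⁻ x, (Measure.rnDeriv P Q x) ^ lam ∂Q := by
  rcases hlam.eq_or_lt with rfl | hlam
  · simp only [ENNReal.rpow_one]
    rw [Measure.lintegral_rnDeriv hPQ]
    calc _ ≤ (P.bind κ) Set.univ := Measure.lintegral_rnDeriv_le
      _ = _ := by simp
  · have hl0 : 0 < lam := by linarith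
    refine le_of_tendsto' (lintegral_tendsto_of_tendsto_of_monotone
      (f := fun (n : ℕ) y => (min (Measure.rnDeriv (P.bind κ) (Q.bind κ) y) n) ^ lam)
      (fun n => (((Measure.measurable_rnDeriv _ _).min measurable_const).pow_const _).aemeasurable)
      ?_ ?_) (fun n => renyi_aux P Q hPQ κ lam hlam n)
    · refine Filter.Eventually.of_forall fun y a b hab => ?_
      exact ENNReal.rpow_le_rpow (min_le_min le_rfl (by exact_mod_cast hab)) hl0.le
    · refine Filter.Eventually.of_forall fun y => ?_
      refine (ENNReal.continuous_rpow_const.tendsto _).comp ?_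
      have := (tendsto_const_nhds (x := Measure.rnDeriv (P.bind κ) (Q.bind κ) y)).min
        ENNReal.tendsto_nat_nhds_top
      simpa using this
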